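/- arXiv:2102.06148 — 2 statements merged into one kernel-verified Lean document; each statement's English description precedes it below -/
import Mathlib

section
/- (Oα is not definable in Coalition Logic) Let Agt contain three distinct agents a, b, c and let p, q be distinct atomic propositions. Then there is no CL-formula χ such that for every concurrent game model M over Agt and every state s of M: M, s ⊨ χ if and only if M, s ⊨ Oα({b};{a})(q▷p). In particular, there exist a concurrent game model and two CL-bisimilar states of it such that Oα({b};{a})(q▷p) is true at one and false at the other. -/
/-- A concurrent game model over a set of agents `Agt` and atomic propositions `Prp`.
The local outcome function is represented by a total function `out`; the semantics
only ever uses its values on action profiles that are available at the given state. -/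
structure CGM (Agt Prp : Type) where
  State : Type
  state_ne : Nonempty State
  Act : Agt → Type
  act_ne : ∀ a, Nonempty (Act a)
  avail : State → ∀ a, Set (Act a)
  avail_ne : ∀ s a, (avail s a).Nonempty
  out : State → (∀ a, Act a) → State
  val : Prp → Set State

namespace CGM

variable {Agt Prp : Type}

/-- `σ` represents a joint action of coalition `C` available at state `s`
(only the values of `σ` on `C` are relevant). -/
def JointAt (M : CGM Agt Prp) (C : Set Agt) (s : M.State)
    (σ : ∀ a, M.Act a) : Prop :=
  ∀ a ∈ C, σ a ∈ M.avail s a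

/-- `Out[s, σ_C]`: outcomes of available action profiles at `s` extending `σ` on `C`. -/
def Outs (M : CGM Agt Prp) (s : M.State) (C : Set Agt)
    (σ : ∀ a, M.Act a) : Set M.State :=
  { u | ∃ τ : ∀ a, M.Act a, (∀ a, τ a ∈ M.avail s a) ∧
        (∀ a ∈ C, τ a = σ a) ∧ M.out s τ = u }

/-- `Out[s, σ_A ⊎ σ_B]`: outcomes of available action profiles at `s` agreeing
with `σA` on `A` and with `σB` on `B \ A`. -/
def OutsAB (M : CGM Agt Prp) (s : M.State) (A B : Set Agt)
    (σA σB : ∀ a, M.Act a) : Set M.State :=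
  { u | ∃ τ : ∀ a, M.Act a, (∀ a, τ a ∈ M.avail s a) ∧
        (∀ a ∈ A, τ a = σA a) ∧ (∀ a ∈ B \ A, τ a = σB a) ∧ M.out s τ = u }

end CGM

/-- Formulas of the logic ConStR. -/
inductive ConStR (Agt Prp : Type) : Type where
  | atom : Prp → ConStR Agt Prp
  | tru  : ConStR Agt Prp
  | neg  : ConStR Agt Prp → ConStR Agt Prp
  | conj : ConStR Agt Prp → ConStR Agt Prp → ConStR Agt Prp
  | oc   : Set Agt → Set Agt → ConStR Agt Prp → ConStR Agt Prp → ConStR Agt Prp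
  | oa   : Set Agt → Set Agt → ConStR Agt Prp → ConStR Agt Prp → ConStR Agt Prp
  | ob   : Set Agt → Set Agt → ConStR Agt Prp → ConStR Agt Prp → ConStR Agt Prp

namespace CGM

variable {Agt Prp : Type}

/-- Truth of a ConStR-formula at a state of a concurrent game model. -/
def sat (M : CGM Agt Prp) : ConStR Agt Prp → M.State → Prop
  | .atom p, s => s ∈ M.val p
  | .tru, _ => True
  | .neg φ, s => ¬ M.sat φ s
  | .conj φ ψ, s => M.sat φ s ∧ M.sat ψ s
  | .oc A B φ ψ, s =>
      ∃ σA, M.JointAt A s σA ∧ (∀ u ∈ M.Outs s A σA, M.sat φ u) ∧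
        ∃ σB, M.JointAt B s σB ∧ ∀ u ∈ M.OutsAB s A B σA σB, M.sat ψ u
  | .oa A B φ ψ, s =>
      ∃ σB, M.JointAt B s σB ∧ ∀ σA, M.JointAt A s σA →
        (∀ u ∈ M.Outs s A σA, M.sat φ u) →
        ∀ u ∈ M.OutsAB s A B σA σB, M.sat ψ u
  | .ob A B φ ψ, s =>
      ∀ σA, M.JointAt A s σA → (∀ u ∈ M.Outs s A σA, M.sat φ u) →
        ∃ σB, M.JointAt B s σB ∧ ∀ u ∈ M.OutsAB s A B σA σB, M.sat ψ u

end CGM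

/-- Formulas of Coalition Logic CL. -/
inductive CLForm (Agt Prp : Type) : Type where
  | atom : Prp → CLForm Agt Prp
  | tru  : CLForm Agt Prp
  | neg  : CLForm Agt Prp → CLForm Agt Prp
  | conj : CLForm Agt Prp → CLForm Agt Prp → CLForm Agt Prp
  | coal : Set Agt → CLForm Agt Prp → CLForm Agt Prp

namespace CGM

variable {Agt Prp : Type}

/-- Truth of a CL-formula at a state of a concurrent game model. -/
def satCL (M : CGM Agt Prp) : CLForm Agt Prp → M.State → Prop
  | .atom p, s => s ∈ M.val p
  | .tru, _ => True
  | .neg φ, s => ¬ M.satCL φ s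
  | .conj φ ψ, s => M.satCL φ s ∧ M.satCL ψ s
  | .coal C φ, s => ∃ σ, M.JointAt C s σ ∧ ∀ u ∈ M.Outs s C σ, M.satCL φ u

/-- A CL-bisimulation in a concurrent game model. -/
def CLBisim (M : CGM Agt Prp) (R : M.State → M.State → Prop) : Prop :=
  ∀ s1 s2, R s1 s2 →
    (∀ p : Prp, s1 ∈ M.val p ↔ s2 ∈ M.val p) ∧
    ∀ C : Set Agt,
      (∀ σ1, M.JointAt C s1 σ1 → ∃ σ2, M.JointAt C s2 σ2 ∧
        ∀ u2 ∈ M.Outs s2 C σ2, ∃ u1 ∈ M.Outs s1 C σ1, R u1 u2) ∧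
      (∀ σ2, M.JointAt C s2 σ2 → ∃ σ1, M.JointAt C s1 σ1 ∧
        ∀ u1 ∈ M.Outs s1 C σ1, ∃ u2 ∈ M.Outs s2 C σ2, R u2 u1)

end CGM

/-!
In the game *without mirror*, `a` chooses `x ∈ {0, 1}`, `b` chooses `y ∈ ℤ/3`, and the outcome is
`x + y`. In the game *with mirror*, `b` has one more action, whose outcome is `1 - x`. No other
agent has any influence. Let `p` hold at outcome `0` and `q` at the outcomes `0` and `1`.

No coalition gains anything from the mirror: if it contains `a`, its `x` is known and `b` can play
`y = 1 - 2x` instead; if it does not contain `a`, then playing `y = 0` leaves open the same outcomes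
`{0, 1}`. So the two games are CL-bisimilar. But without mirror the only action of `b` that forces
`q` is `y = 0`, against which `x = 0` yields `p`; with mirror, both `y = 0` and the mirror
force `q`, and no single `x` yields `p` against both.
-/

namespace CGM

variable {Agt Prp : Type} {M : CGM Agt Prp} {R : M.State → M.State → Prop} {s t : M.State}

/-- The Forth clause of a CL-bisimulation, for the pair of states `s`, `t` and all coalitions. -/
def Forth (M : CGM Agt Prp) (R : M.State → M.State → Prop) (s t : M.State) : Prop :=
  ∀ (C : Set Agt) (σ : ∀ d, M.Act d), M.JointAt C s σ →
    ∃ σ', M.JointAt C t σ' ∧ ∀ v ∈ M.Outs t C σ', ∃ u ∈ M.Outs s C σ, R u v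

theorem Forth.refl (hR : ∀ s, R s s) (s : M.State) : M.Forth R s s :=
  fun _ σ hσ => ⟨σ, hσ, fun v hv => ⟨v, hv, hR v⟩⟩

theorem CLBisim.of_symm (hR : ∀ s t, R s t → R t s)
    (atoms : ∀ s t, R s t → ∀ r, s ∈ M.val r → t ∈ M.val r)
    (forth : ∀ s t, R s t → M.Forth R s t) : M.CLBisim R := fun s t h =>
  ⟨fun r => ⟨atoms s t h r, atoms t s (hR s t h) r⟩,
    fun C => ⟨forth s t h C, forth t s (hR s t h) C⟩⟩

theorem CLBisim.satCL_iff (hR : M.CLBisim R) (χ : CLForm Agt Prp) (h : R s t) :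
    M.satCL χ s ↔ M.satCL χ t := by
  induction χ generalizing s t with
  | atom r => exact (hR s t h).1 r
  | tru => exact Iff.rfl
  | neg φ ih => exact not_congr (ih h)
  | conj φ ψ ihφ ihψ => exact and_congr (ihφ h) (ihψ h)
  | coal C φ ih =>
    obtain ⟨forth, back⟩ := (hR s t h).2 C
    constructor
    · rintro ⟨σ, hσ, hφ⟩
      obtain ⟨σ', hσ', hsim⟩ := forth σ hσ
      refine ⟨σ', hσ', fun v hv => ?_⟩
      obtain ⟨u, hu, huv⟩ := hsim v hv
      exact (ih huv).1 (hφ u hu)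
    · rintro ⟨σ', hσ', hφ⟩
      obtain ⟨σ, hσ, hsim⟩ := back σ' hσ'
      refine ⟨σ, hσ, fun u hu => ?_⟩
      obtain ⟨v, hv, hvu⟩ := hsim u hu
      exact (ih hvu).1 (hφ v hv)

end CGM

/-- The states of the separating model: the initial states `root false` and `root true` of the games
without and with mirror, and the common outcomes `leaf k`, at which nothing changes any more. -/
inductive MirrorState : Type
  | root (mirror : Bool)
  | leaf (k : ZMod 3)

namespace MirrorState

/-- The relation identifying the two roots, which is a CL-bisimulation on the separating model. -/
inductive Bisim : MirrorState → MirrorState → Prop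
  | root (i j : Bool) : Bisim (root i) (root j)
  | leaf (k : ZMod 3) : Bisim (leaf k) (leaf k)

theorem Bisim.refl : ∀ s, Bisim s s
  | .root i => .root i i
  | .leaf k => .leaf k

theorem Bisim.symm : ∀ s t, Bisim s t → Bisim t s
  | _, _, .root i j => .root j i
  | _, _, .leaf k => .leaf k

end MirrorState

/-- The actions of the separating model, the same type for every agent. Only the first component of
the action of `a` and the second component of the action of `b` will matter. -/
abbrev MirrorAction : Type := Bool × Option (ZMod 3)

/-- The outcome of the two-player game, where `false` and `true` stand for the choices `x = 0` and
`x = 1` of the first player; the second adds `y` by playing `some y` and mirrors by `none`. -/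
def mirrorOutcome (x : Bool) : Option (ZMod 3) → ZMod 3
  | some y => x.toNat + y
  | none => 1 - x.toNat

theorem mirrorOutcome_not_none (x : Bool) :
    mirrorOutcome (!x) none = mirrorOutcome x (some 0) := by
  cases x <;> rfl

theorem mirrorOutcome_some_one_sub_two_mul (x : Bool) :
    mirrorOutcome x (some (1 - 2 * x.toNat)) = mirrorOutcome x none := by
  simp only [mirrorOutcome]
  ring

/-- The separating model: the games with and without mirror, played by `a` and `b`. It is reducible
so that its states and actions are recognised as `MirrorState` and `MirrorAction`. -/
abbrev mirrorModel {Agt Prp : Type} (a b : Agt) (p q : Prp) : CGM Agt Prp where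
  State := MirrorState
  state_ne := ⟨.leaf 0⟩
  Act _ := MirrorAction
  act_ne _ := inferInstance
  avail s d := {m | s = .root false → d = b → m.2 ≠ none}
  avail_ne _ _ := ⟨(false, some 0), fun _ _ => Option.some_ne_none 0⟩
  out
    | .root _, σ => .leaf (mirrorOutcome (σ a).1 (σ b).2)
    | .leaf k, _ => .leaf k
  val r := .leaf '' {k | r = p ∧ k = 0 ∨ r = q ∧ k ≠ 2}

namespace mirrorModel

open MirrorState

variable {Agt Prp : Type} {a b : Agt} {p q : Prp}

theorem leaf_mem_val_left (hpq : p ≠ q) {k : ZMod 3} :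
    leaf k ∈ (mirrorModel a b p q).val p ↔ k = 0 := by
  simp [hpq]

theorem leaf_mem_val_right (hpq : p ≠ q) {k : ZMod 3} :
    leaf k ∈ (mirrorModel a b p q).val q ↔ k ≠ 2 := by
  simp [hpq.symm]

theorem root_notMem_val (i : Bool) (r : Prp) : root i ∉ (mirrorModel a b p q).val r :=
  nofun

theorem out_root (i : Bool) (τ : Agt → MirrorAction) :
    (mirrorModel a b p q).out (root i) τ = leaf (mirrorOutcome (τ a).1 (τ b).2) :=
  rfl

theorem jointAt_root_iff {i : Bool} {C : Set Agt} {σ : Agt → MirrorAction} :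
    (mirrorModel a b p q).JointAt C (root i) σ ↔ (i = false → b ∈ C → (σ b).2 ≠ none) :=
  ⟨fun h hi hb => h b hb (congrArg root hi) rfl,
    fun h _ hd hi hdb => hdb ▸ h (root.inj hi) (hdb ▸ hd)⟩

theorem mem_outs_root_iff {i : Bool} {C : Set Agt} {σ : Agt → MirrorAction}
    {u : MirrorState} :
    u ∈ (mirrorModel a b p q).Outs (root i) C σ ↔
      ∃ τ : Agt → MirrorAction, (i = false → (τ b).2 ≠ none) ∧
        (∀ d ∈ C, τ d = σ d) ∧ leaf (mirrorOutcome (τ a).1 (τ b).2) = u :=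
  ⟨fun ⟨τ, hav, hτ, hu⟩ => ⟨τ, fun hi => hav b (congrArg root hi) rfl, hτ, hu⟩,
    fun ⟨τ, hb, hτ, hu⟩ => ⟨τ, fun _ hi hd => hd ▸ hb (root.inj hi), hτ, hu⟩⟩

theorem forth_root_false_true (hab : a ≠ b) :
    (mirrorModel a b p q).Forth Bisim (root false) (root true) := by
  classical
  intro C σ hσ
  refine ⟨σ, jointAt_root_iff.2 nofun, fun v hv => ?_⟩
  obtain ⟨τ, -, hτ, rfl⟩ := mem_outs_root_iff.1 hv
  refine ⟨_, mem_outs_root_iff.2 ?_, .leaf _⟩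
  by_cases hm : (τ b).2 = none
  · have hbC : b ∉ C := fun hb => jointAt_root_iff.1 hσ rfl hb (hτ b hb ▸ hm)
    refine ⟨Function.update τ b (false, some (1 - 2 * (τ a).1.toNat)), by simp, ?_, ?_⟩
    · intro d hd
      rw [Function.update_of_ne (ne_of_mem_of_not_mem hd hbC), hτ d hd]
    · simp only [Function.update_self, Function.update_of_ne hab,
        mirrorOutcome_some_one_sub_two_mul, hm]
  · exact ⟨τ, fun _ => hm, hτ, rfl⟩

theorem exists_some_simulating_none (hab : a ≠ b) {C : Set Agt}
    {σ : Agt → MirrorAction} (hσ : (σ b).2 = none) :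
    ∃ y, ∀ τ : Agt → MirrorAction, (∀ d ∈ C \ {b}, τ d = σ d) → (τ b).2 = some y →
      ∃ τ' : Agt → MirrorAction, (∀ d ∈ C, τ' d = σ d) ∧
        mirrorOutcome (τ' a).1 (τ' b).2 = mirrorOutcome (τ a).1 (τ b).2 := by
  classical
  by_cases haC : a ∈ C
  · refine ⟨1 - 2 * (σ a).1.toNat, fun τ hτ hy => ⟨Function.update τ b (σ b), ?_, ?_⟩⟩
    · intro d hd
      rcases eq_or_ne d b with rfl | hdb
      · rw [Function.update_self]
      · rw [Function.update_of_ne hdb, hτ d ⟨hd, hdb⟩]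
    · rw [Function.update_self, Function.update_of_ne hab, hσ, hy, hτ a ⟨haC, hab⟩,
        mirrorOutcome_some_one_sub_two_mul]
  · refine ⟨0, fun τ hτ hy =>
      ⟨Function.update (Function.update τ b (σ b)) a (!(τ a).1, none), ?_, ?_⟩⟩
    · intro d hd
      rw [Function.update_of_ne (ne_of_mem_of_not_mem hd haC)]
      rcases eq_or_ne d b with rfl | hdb
      · rw [Function.update_self]
      · rw [Function.update_of_ne hdb, hτ d ⟨hd, hdb⟩]
    · rw [Function.update_self, Function.update_of_ne hab.symm, Function.update_self, hσ, hy,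
        mirrorOutcome_not_none]

theorem forth_root_true_false (hab : a ≠ b) :
    (mirrorModel a b p q).Forth Bisim (root true) (root false) := by
  classical
  intro C (σ : Agt → MirrorAction) _
  by_cases hσ : b ∈ C ∧ (σ b).2 = none
  · obtain ⟨y, hy⟩ := exists_some_simulating_none hab (C := C) hσ.2
    refine ⟨Function.update σ b (false, some y), jointAt_root_iff.2 (by simp), fun v hv => ?_⟩
    obtain ⟨τ, -, hτ, rfl⟩ := mem_outs_root_iff.1 hv
    have hτb : (τ b).2 = some y := by rw [hτ b hσ.1, Function.update_self]
    have hτσ : ∀ d ∈ C \ {b}, τ d = σ d := fun d hd => by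
      rw [hτ d hd.1, Function.update_of_ne hd.2]
    obtain ⟨τ', hτ', hout⟩ := hy τ hτσ hτb
    exact ⟨_, mem_outs_root_iff.2 ⟨τ', nofun, hτ', congrArg leaf hout⟩, .leaf _⟩
  · refine ⟨σ, jointAt_root_iff.2 fun _ hb hm => hσ ⟨hb, hm⟩, fun v hv => ?_⟩
    obtain ⟨τ, -, hτ, rfl⟩ := mem_outs_root_iff.1 hv
    exact ⟨_, mem_outs_root_iff.2 ⟨τ, nofun, hτ, rfl⟩, .leaf _⟩

theorem clBisim (hab : a ≠ b) : (mirrorModel a b p q).CLBisim Bisim := by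
  refine .of_symm Bisim.symm ?_ ?_
  · rintro _ _ (_ | _) r hr
    · exact absurd hr (root_notMem_val _ r)
    · exact hr
  · rintro _ _ (⟨_ | _, _ | _⟩ | _)
    · exact .refl Bisim.refl _
    · exact forth_root_false_true hab
    · exact forth_root_true_false hab
    · exact .refl Bisim.refl _
    · exact .refl Bisim.refl _

theorem outs_root_singleton (hab : a ≠ b) {i : Bool} {σ : Agt → MirrorAction}
    (hσ : (mirrorModel a b p q).JointAt {b} (root i) σ) :
    (mirrorModel a b p q).Outs (root i) {b} σ =
      Set.range fun x => leaf (mirrorOutcome x (σ b).2) := by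
  classical
  ext u
  rw [mem_outs_root_iff]
  constructor
  · rintro ⟨τ, -, hτ, rfl⟩
    exact ⟨(τ a).1, by rw [hτ b rfl]⟩
  · rintro ⟨x, rfl⟩
    refine ⟨Function.update σ a (x, none), fun hi => ?_, ?_, ?_⟩
    · rw [Function.update_of_ne hab.symm]
      exact jointAt_root_iff.1 hσ hi rfl
    · rintro _ rfl
      rw [Function.update_of_ne hab.symm]
    · rw [Function.update_self, Function.update_of_ne hab.symm]

theorem outsAB_root_singleton_singleton (hab : a ≠ b) {i : Bool}
    {σ σ' : Agt → MirrorAction}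
    (hσ : (mirrorModel a b p q).JointAt {b} (root i) σ) :
    (mirrorModel a b p q).OutsAB (root i) {b} {a} σ σ' =
      {leaf (mirrorOutcome (σ' a).1 (σ b).2)} := by
  classical
  refine Set.Subset.antisymm ?_ ?_
  · rintro _ ⟨τ, -, hτb, hτa, rfl⟩
    rw [out_root, hτb b rfl, hτa a ⟨rfl, hab⟩]
    rfl
  · rintro _ rfl
    refine ⟨Function.update σ' b (σ b), fun d hi hd => ?_, ?_, ?_, ?_⟩
    · subst hd
      rw [Function.update_self]
      exact jointAt_root_iff.1 hσ (root.inj hi) rfl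
    · rintro _ rfl
      rw [Function.update_self]
    · rintro d ⟨-, hdb⟩
      rw [Function.update_of_ne hdb]
    · rw [out_root, Function.update_self, Function.update_of_ne hab]

theorem sat_oa_root_iff (hab : a ≠ b) (hpq : p ≠ q) {i : Bool} :
    (mirrorModel a b p q).sat (.oa {b} {a} (.atom q) (.atom p)) (root i) ↔
      ∃ x, ∀ m, (i = false → m ≠ none) → (∀ x', mirrorOutcome x' m ≠ 2) →
        mirrorOutcome x m = 0 := by
  constructor
  · rintro ⟨σ', -, h⟩
    refine ⟨(σ' a).1, fun m hm hq => ?_⟩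
    have hσ : (mirrorModel a b p q).JointAt {b} (root i) fun _ => (false, m) :=
      jointAt_root_iff.2 fun hi _ => hm hi
    have hp := h _ hσ
    rw [outs_root_singleton hab hσ, outsAB_root_singleton_singleton hab hσ] at hp
    refine (leaf_mem_val_left hpq).1 (hp ?_ _ rfl)
    rintro _ ⟨x', rfl⟩
    exact (leaf_mem_val_right hpq).2 (hq x')
  · rintro ⟨x, hx⟩
    refine ⟨fun _ => (x, some 0), jointAt_root_iff.2 nofun, fun σ hσ hq => ?_⟩
    rw [outs_root_singleton hab hσ] at hq
    rw [outsAB_root_singleton_singleton hab hσ]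
    rintro _ rfl
    exact (leaf_mem_val_left hpq).2 (hx _ (fun hi => jointAt_root_iff.1 hσ hi rfl)
      fun x' => (leaf_mem_val_right hpq).1 (hq _ ⟨x', rfl⟩))

theorem sat_oa_root_false (hab : a ≠ b) (hpq : p ≠ q) :
    (mirrorModel a b p q).sat (.oa {b} {a} (.atom q) (.atom p)) (root false) :=
  (sat_oa_root_iff hab hpq).2 ⟨false, by decide⟩

theorem not_sat_oa_root_true (hab : a ≠ b) (hpq : p ≠ q) :
    ¬ (mirrorModel a b p q).sat (.oa {b} {a} (.atom q) (.atom p)) (root true) := by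
  rw [sat_oa_root_iff hab hpq]
  rintro ⟨x, hx⟩
  cases x with
  | false => exact absurd (hx none nofun (by decide)) (by decide)
  | true => exact absurd (hx (some 0) nofun (by decide)) (by decide)

end mirrorModel

theorem oalpha_not_definable_in_CL_general {Agt Prp : Type} (a b : Agt) (hab : a ≠ b)
    (p q : Prp) (hpq : p ≠ q) :
    (¬ ∃ χ : CLForm Agt Prp, ∀ (M : CGM Agt Prp) (s : M.State),
        M.satCL χ s ↔ M.sat (.oa {b} {a} (.atom q) (.atom p)) s) ∧
    (∃ (M : CGM Agt Prp) (R : M.State → M.State → Prop) (s1 s2 : M.State),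
        M.CLBisim R ∧ R s1 s2 ∧
        M.sat (.oa {b} {a} (.atom q) (.atom p)) s1 ∧
        ¬ M.sat (.oa {b} {a} (.atom q) (.atom p)) s2) := by
  have hbisim := mirrorModel.clBisim (p := p) (q := q) hab
  have hroots : MirrorState.Bisim (.root false) (.root true) := .root false true
  have hsat := mirrorModel.sat_oa_root_false hab hpq
  have hnot := mirrorModel.not_sat_oa_root_true hab hpq
  refine ⟨?_, mirrorModel a b p q, MirrorState.Bisim, .root false, .root true,
    hbisim, hroots, hsat, hnot⟩
  rintro ⟨χ, hχ⟩
  exact hnot ((hχ _ _).1 ((hbisim.satCL_iff χ hroots).1 ((hχ _ _).2 hsat)))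

/-- **Oα is not definable in Coalition Logic.** No CL-formula is equivalent to
`Oα({b};{a})(q▷p)` over all concurrent game models; in particular there are
CL-bisimilar states distinguished by that formula. -/
theorem oalpha_not_definable_in_CL {Agt Prp : Type} [Finite Agt]
    (a b c : Agt) (hab : a ≠ b) (hac : a ≠ c) (hbc : b ≠ c)
    (p q : Prp) (hpq : p ≠ q) :
    (¬ ∃ χ : CLForm Agt Prp, ∀ (M : CGM Agt Prp) (s : M.State),
        M.satCL χ s ↔ M.sat (.oa {b} {a} (.atom q) (.atom p)) s) ∧
    (∃ (M : CGM Agt Prp) (R : M.State → M.State → Prop) (s1 s2 : M.State),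
        M.CLBisim R ∧ R s1 s2 ∧
        M.sat (.oa {b} {a} (.atom q) (.atom p)) s1 ∧
        ¬ M.sat (.oa {b} {a} (.atom q) (.atom p)) s2) :=
  oalpha_not_definable_in_CL_general a b hab p q hpq
end

section
/- (Soundness of axiom Oβ 4) For all coalitions A, B ⊆ Agt and every ConStR-formula φ, the formula Oβ(∅;A)(⊤▷φ) → ¬Oβ(A;B)(φ▷⊥) is valid: at every state s of every concurrent game model M, if M, s ⊨ Oβ(∅;A)(⊤▷φ) then M, s ⊭ Oβ(A;B)(φ▷⊥). -/
/-!
Both formulas are about the power of `A` alone: `Oβ(∅;A)(⊤▷φ)` says that `A` can force `φ`, and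
`Oβ(A;B)(φ▷⊥)` says that it cannot, because no action of `B` can bring about `⊥` when every joint
action has at least one outcome.
-/

namespace CGM

variable {Agt Prp : Type} {M : CGM Agt Prp} {s : M.State} {A B C : Set Agt}
  {σ σA σB : ∀ a, M.Act a} {φ : ConStR Agt Prp}

/-- Coalition `C` can force `φ` at `s`: some joint action of `C` makes `φ` true at every outcome.
This is the modality `[C]φ` of coalition logic. -/
def CanForce (M : CGM Agt Prp) (C : Set Agt) (s : M.State) (φ : ConStR Agt Prp) : Prop :=
  ∃ σ, M.JointAt C s σ ∧ ∀ u ∈ M.Outs s C σ, M.sat φ u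

theorem JointAt.piecewise [∀ a, Decidable (a ∈ A)] (hA : M.JointAt A s σA)
    (hB : M.JointAt B s σB) : M.JointAt (A ∪ B) s (A.piecewise σA σB) := by
  intro a ha
  by_cases haA : a ∈ A
  · simpa only [Set.piecewise_eq_of_mem _ _ _ haA] using hA a haA
  · simpa only [Set.piecewise_eq_of_notMem _ _ _ haA] using hB a (ha.resolve_left haA)

theorem JointAt.outs_nonempty (hσ : M.JointAt C s σ) : (M.Outs s C σ).Nonempty := by
  classical
  choose d hd using M.avail_ne s
  have hτ : M.JointAt (C ∪ Set.univ) s (C.piecewise σ d) := hσ.piecewise fun a _ => hd a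
  exact ⟨_, C.piecewise σ d, fun a => hτ a (Or.inr trivial),
    fun a ha => C.piecewise_eq_of_mem σ d ha, rfl⟩

theorem outsAB_eq_outs_piecewise [∀ a, Decidable (a ∈ A)] :
    M.OutsAB s A B σA σB = M.Outs s (A ∪ B) (A.piecewise σA σB) := by
  have agree_iff (τ : ∀ a, M.Act a) :
      ((∀ a ∈ A, τ a = σA a) ∧ ∀ a ∈ B \ A, τ a = σB a) ↔
        ∀ a ∈ A ∪ B, τ a = A.piecewise σA σB a := by
    grind [Set.piecewise]
  simp only [OutsAB, Outs, ← agree_iff, and_assoc]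

theorem JointAt.outsAB_nonempty (hA : M.JointAt A s σA) (hB : M.JointAt B s σB) :
    (M.OutsAB s A B σA σB).Nonempty := by
  classical
  rw [outsAB_eq_outs_piecewise]
  exact (hA.piecewise hB).outs_nonempty

theorem outsAB_empty_left : M.OutsAB s ∅ B σA σB = M.Outs s B σB := by
  classical
  rw [outsAB_eq_outs_piecewise, Set.piecewise_empty, Set.empty_union]

theorem sat_ob_empty_tru : M.sat (.ob ∅ A .tru φ) s ↔ M.CanForce A s φ := by
  simp only [sat, outsAB_empty_left]
  constructor
  · exact fun h => h (fun a => (M.act_ne a).some) (fun _ ha => ha.elim) fun _ _ => trivial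
  · exact fun h _ _ _ => h

theorem sat_ob_bot : M.sat (.ob A B φ (.neg .tru)) s ↔ ¬ M.CanForce A s φ := by
  constructor
  · rintro h ⟨σA, hA, hφ⟩
    obtain ⟨σB, hB, hbot⟩ := h σA hA hφ
    obtain ⟨u, hu⟩ := hA.outsAB_nonempty hB
    exact hbot u hu trivial
  · exact fun h σA hA hφ => (h ⟨σA, hA, hφ⟩).elim

end CGM

theorem ob4_sound_general {Agt Prp : Type} (A B : Set Agt) (φ : ConStR Agt Prp)
    (M : CGM Agt Prp) (s : M.State) :
    M.sat (.ob ∅ A .tru φ) s ↔ ¬ M.sat (.ob A B φ (.neg .tru)) s := by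
  rw [CGM.sat_ob_empty_tru, CGM.sat_ob_bot, not_not]

/-- **Soundness of axiom Oβ 4:** `Oβ(∅;A)(⊤▷φ) → ¬ Oβ(A;B)(φ▷⊥)` is valid
(here `⊥ := ¬⊤`). -/
theorem ob4_sound {Agt Prp : Type} [Finite Agt]
    (A B : Set Agt) (φ : ConStR Agt Prp)
    (M : CGM Agt Prp) (s : M.State)
    (h : M.sat (.ob (∅ : Set Agt) A .tru φ) s) :
    ¬ M.sat (.ob A B φ (.neg .tru)) s :=
  (ob4_sound_general A B φ M s).mp h
end
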